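/- Let z∞ ∈ [0,1) and Γ, γ₊ ∈ ℝ. If σ(ℓ,z) ≥ 0 for every ℓ ≥ 0 and z ∈ ℝ with ℓ² + z² < 1, then Γ ≥ 0 and γ₊ ≥ 0. (Nonnegativity of the map entropy production forces nonnegativity of both damping rates, obtained by evaluating σ on the plane z = z∞ and on the z-axis.) -/

import Mathlib

/-- Inverse hyperbolic tangent: arctanh r = (1/2) log((1+r)/(1-r)). -/
noncomputable def artanh (r : ℝ) : ℝ := (1/2) * Real.log ((1 + r) / (1 - r))

/-- F(r) := arctanh(r)/r with the convention F(0) = 1. -/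
noncomputable def F (r : ℝ) : ℝ := if r = 0 then 1 else artanh r / r

/-- Fixed-point entropy production of the phase-covariant qubit dynamics,
extended to the whole Bloch ball, at the point with Bloch coordinates (ℓ, z). -/
noncomputable def sigmaFP (Γ γp zinf ℓ z : ℝ) : ℝ :=
  Γ * ℓ ^ 2 * F (Real.sqrt (ℓ ^ 2 + z ^ 2)) +
    γp * (zinf - z) * (artanh zinf - z * F (Real.sqrt (ℓ ^ 2 + z ^ 2)))

/-!
Each rate is isolated by restricting `sigmaFP` to a set where the other term vanishes. On the plane
`z = zinf` only `Γ * ℓ ^ 2 * F r` survives; off the axis it has the sign of `Γ`, because `F > 0`.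
On the axis `ℓ = 0` the oddness of `artanh` gives `z * F |z| = artanh z`, which leaves
`γp * (zinf - z) * (artanh zinf - artanh z)`; for `z ≠ zinf` it has the sign of `γp`, because
`artanh` is strictly increasing.
-/

open Set

theorem artanh_zero : artanh 0 = 0 := by simp [artanh]

theorem artanh_neg (x : ℝ) : artanh (-x) = -artanh x := by
  rw [artanh, artanh, ← mul_neg, ← Real.log_inv, inv_div, sub_neg_eq_add, ← sub_eq_add_neg]

theorem eqOn_artanh_real_artanh : EqOn artanh Real.artanh (Icc (-1) 1) :=
  fun _ hx ↦ (Real.artanh_eq_half_log hx).symm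

theorem strictMonoOn_artanh : StrictMonoOn artanh (Ioo (-1) 1) :=
  Real.strictMonoOn_artanh.congr (eqOn_artanh_real_artanh.symm.mono Ioo_subset_Icc_self)

theorem sub_mul_sub_pos_of_strictMonoOn {R : Type*} [Ring R] [LinearOrder R] [IsStrictOrderedRing R]
    {f : R → R} {s : Set R} (hf : StrictMonoOn f s) {x y : R} (hx : x ∈ s) (hy : y ∈ s)
    (hxy : x ≠ y) : 0 < (x - y) * (f x - f y) := by
  rcases hxy.lt_or_gt with hlt | hgt
  · exact mul_pos_of_neg_of_neg (sub_neg.2 hlt) (sub_neg.2 (hf hx hy hlt))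
  · exact mul_pos (sub_pos.2 hgt) (sub_pos.2 (hf hy hx hgt))

theorem mul_F (r : ℝ) : r * F r = artanh r := by
  rcases eq_or_ne r 0 with rfl | hr
  · rw [zero_mul, artanh_zero]
  · rw [F, if_neg hr, mul_div_cancel₀ _ hr]

theorem F_neg (r : ℝ) : F (-r) = F r := by
  simp only [F, neg_eq_zero, artanh_neg, neg_div_neg_eq]

theorem F_abs (r : ℝ) : F |r| = F r := by
  rcases abs_choice r with hr | hr <;> rw [hr]
  exact F_neg r

theorem F_pos {r : ℝ} (hr : r ∈ Ioo (-1) 1) : 0 < F r := by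
  rcases eq_or_ne r 0 with rfl | hr0
  · rw [F, if_pos rfl]
    exact one_pos
  · have hmul : 0 < r * artanh r := by
      simpa only [artanh_zero, sub_zero] using
        sub_mul_sub_pos_of_strictMonoOn strictMonoOn_artanh hr (by norm_num) hr0
    rw [← mul_F, ← mul_assoc] at hmul
    exact pos_of_mul_pos_right hmul (mul_self_nonneg r)

section SigmaFP

variable {Γ γp zinf ℓ z : ℝ}

theorem sigmaFP_fixed_plane (Γ γp ℓ z : ℝ) :
    sigmaFP Γ γp z ℓ z = Γ * (ℓ ^ 2 * F √(ℓ ^ 2 + z ^ 2)) := by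
  rw [sigmaFP]
  ring

theorem sigmaFP_axis (Γ γp zinf z : ℝ) :
    sigmaFP Γ γp zinf 0 z = γp * ((zinf - z) * (artanh zinf - artanh z)) := by
  have hF : F √(0 ^ 2 + z ^ 2) = F z := by
    rw [zero_pow two_ne_zero, zero_add, Real.sqrt_sq_eq_abs, F_abs]
  rw [sigmaFP, hF, mul_F]
  ring

theorem sigmaFP_fixed_plane_nonneg_iff (hℓ : ℓ ≠ 0) (hball : ℓ ^ 2 + z ^ 2 < 1) :
    0 ≤ sigmaFP Γ γp z ℓ z ↔ 0 ≤ Γ := by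
  have hr : √(ℓ ^ 2 + z ^ 2) ∈ Ioo (-1) 1 :=
    ⟨neg_one_lt_zero.trans_le (Real.sqrt_nonneg _), by rwa [Real.sqrt_lt' one_pos, one_pow]⟩
  rw [sigmaFP_fixed_plane]
  exact mul_nonneg_iff_of_pos_right (mul_pos (by positivity) (F_pos hr))

theorem sigmaFP_axis_nonneg_iff (hzinf : zinf ∈ Ioo (-1) 1) (hz : z ∈ Ioo (-1) 1)
    (hne : zinf ≠ z) : 0 ≤ sigmaFP Γ γp zinf 0 z ↔ 0 ≤ γp := by
  rw [sigmaFP_axis]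
  exact mul_nonneg_iff_of_pos_right
    (sub_mul_sub_pos_of_strictMonoOn strictMonoOn_artanh hzinf hz hne)

theorem rates_nonneg_of_sigmaFP_nonneg_general (hzinf : zinf ∈ Ioo (-1) 1)
    (h : ∀ ℓ z : ℝ, 0 ≤ ℓ → ℓ ^ 2 + z ^ 2 < 1 → 0 ≤ sigmaFP Γ γp zinf ℓ z) :
    0 ≤ Γ ∧ 0 ≤ γp := by
  constructor
  · have hsq : zinf ^ 2 < 1 := (sq_lt_one_iff_abs_lt_one zinf).2 (abs_lt.2 hzinf)
    obtain ⟨ℓ, hℓ_pos, hℓ_lt⟩ := exists_between (Real.sqrt_pos.2 (sub_pos.2 hsq))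
    have hball : ℓ ^ 2 + zinf ^ 2 < 1 := lt_sub_iff_add_lt.1 ((Real.lt_sqrt hℓ_pos.le).1 hℓ_lt)
    exact (sigmaFP_fixed_plane_nonneg_iff hℓ_pos.ne' hball).1 (h ℓ zinf hℓ_pos.le hball)
  · obtain ⟨z, hz_gt, hz_lt⟩ := exists_between hzinf.2
    have hz : z ∈ Ioo (-1) 1 := ⟨hzinf.1.trans hz_gt, hz_lt⟩
    have hball : (0 : ℝ) ^ 2 + z ^ 2 < 1 := by
      rw [zero_pow two_ne_zero, zero_add, sq_lt_one_iff_abs_lt_one]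
      exact abs_lt.2 hz
    exact (sigmaFP_axis_nonneg_iff hzinf hz hz_gt.ne).1 (h 0 z le_rfl hball)

end SigmaFP

/-- Nonnegativity of the map entropy production forces nonnegativity of both
damping rates. -/
theorem rates_nonneg_of_sigmaFP_nonneg
    (zinf Γ γp : ℝ) (hz0 : 0 ≤ zinf) (hz1 : zinf < 1)
    (h : ∀ ℓ z : ℝ, 0 ≤ ℓ → ℓ ^ 2 + z ^ 2 < 1 → 0 ≤ sigmaFP Γ γp zinf ℓ z) :
    0 ≤ Γ ∧ 0 ≤ γp :=
  rates_nonneg_of_sigmaFP_nonneg_general ⟨neg_one_lt_zero.trans_le hz0, hz1⟩ h
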